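/- Let t, k, d, m be positive integers with dt < k, let F be a finite field, and let b ≥ log_{|F|}(k) be an integer. Set ℓ = b(k − dt). Then there is a t-private, k-server linear HSS for POLY_{d,m}(F)^ℓ, in which Share is t-private k-party CNF sharing over F, with download rate at least 1 − dt/k. -/

import Mathlib

/-!
Write each input as the sum of its CNF summands. The monomials of `f(∑_S x_S)` have degree at most
`d`, and each summand is missed by `t` servers, so each monomial is missed by at most `dt` servers.
Hence `f(x) = ∑_U g_U`, where `U` runs over the sets of `dt` servers and every server outside `U`
can evaluate `g_U`.

It remains to find an `F`-linear map that recovers `b(k - dt)` values from `b` symbols per server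
and stays onto when any `dt` servers are forced to send zero: for each `U`, the servers outside `U`
then agree on a preimage of `g_U`, and by linearity the preimages are simply added. Over the
extension `E/F` of degree `b`, which has at least `k` elements, the map
`v ↦ (∑_j α_j ^ r v_j)_{r < k - dt}` with distinct `α_j` does this, because any `k - dt` of its
columns form an invertible Vandermonde matrix.
-/

open scoped BigOperators

/-- The index type for the `t`-element subsets of `[k]`. -/
abbrev TSubset (k t : ℕ) : Type := {S : Finset (Fin k) // S.card = t}

/-- `t`-privacy of `t`-private `k`-party CNF sharing. -/
def CNFPrivate (F : Type) [Field F] [Fintype F] (k t : ℕ) : Prop :=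
  ∀ T : Finset (Fin k), T.card ≤ t → ∀ x x' : F,
    ∀ v : {S : TSubset k t // ∃ j ∈ T, j ∉ S.1} → F,
      Nat.card {xs : TSubset k t → F //
          (∑ S, xs S = x) ∧ ∀ S : {S : TSubset k t // ∃ j ∈ T, j ∉ S.1}, xs S.1 = v S} =
        Nat.card {xs : TSubset k t → F //
          (∑ S, xs S = x') ∧ ∀ S : {S : TSubset k t // ∃ j ∈ T, j ∉ S.1}, xs S.1 = v S}

/-- The bijection adds `x' - x` to the unobserved summand `i₀`. -/
theorem natCard_sum_eq_and_observed_eq {ι G : Type*} [Fintype ι] [AddCommGroup G] {P : ι → Prop}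
    {i₀ : ι} (hi₀ : ¬ P i₀) (v : {i // P i} → G) (x x' : G) :
    Nat.card {xs : ι → G // ∑ i, xs i = x ∧ ∀ i : {i // P i}, xs i = v i} =
      Nat.card {xs : ι → G // ∑ i, xs i = x' ∧ ∀ i : {i // P i}, xs i = v i} := by
  classical
  refine Nat.card_congr ((Equiv.addRight (Pi.single i₀ (x' - x))).subtypeEquiv fun xs => ?_)
  refine and_congr ?_ (forall_congr' fun i => ?_)
  · simp [Finset.sum_add_distrib, ← eq_sub_iff_add_eq]
  · have hi : (i : ι) ≠ i₀ := fun h => hi₀ (h ▸ i.2)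
    simp [hi]

theorem cnfPrivate_of_le (F : Type) [Field F] [Fintype F] {k t : ℕ} (htk : t ≤ k) :
    CNFPrivate F k t := by
  intro T hT x x' v
  obtain ⟨S, hTS, hS⟩ := Finset.exists_superset_card_eq hT (by simpa using htk)
  have hunobserved : ¬ ∃ j ∈ T, j ∉ S := fun ⟨j, hj, hjS⟩ => hjS (hTS hj)
  exact natCard_sum_eq_and_observed_eq (i₀ := (⟨S, hS⟩ : TSubset k t)) hunobserved v x x'

/-- The erasure condition on a reconstruction map `Rec`: every value is reconstructed from some
tuple of answers in which the servers of `U` send zero. -/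
def SurjectiveAvoiding {R κ W V : Type*} [Semiring R] [AddCommMonoid W] [AddCommMonoid V]
    [Module R W] [Module R V] (Rec : (κ → W) →ₗ[R] V) (U : Finset κ) : Prop :=
  ∀ y, ∃ v, (∀ j ∈ U, v j = 0) ∧ Rec v = y

/-- The syndrome map of the Reed–Solomon code with nodes `α`, sending a word `v` to its first `n`
power sums `∑ j, α j ^ r * v j`. -/
def powerSums {E κ : Type*} [CommSemiring E] [Fintype κ] (α : κ → E) (n : ℕ) :
    (κ → E) →ₗ[E] (Fin n → E) :=
  (Matrix.of fun (r : Fin n) j => α j ^ (r : ℕ)).mulVecLin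

theorem powerSums_single {E κ : Type*} [CommSemiring E] [Fintype κ] [DecidableEq κ] (α : κ → E)
    {n : ℕ} (j : κ) (a : E) (r : Fin n) :
    powerSums α n (Pi.single j a) r = α j ^ (r : ℕ) * a := by
  simp [powerSums, mul_comm]

theorem surjectiveAvoiding_powerSums {E κ : Type*} [Field E] [Fintype κ] {α : κ → E}
    (hα : Function.Injective α) {n : ℕ} {U : Finset κ} (hU : U.card + n ≤ Fintype.card κ) :
    SurjectiveAvoiding (powerSums α n) U := by
  classical
  intro y
  obtain ⟨e⟩ : Nonempty (Fin n ↪ {j // j ∉ U}) := by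
    refine Function.Embedding.nonempty_of_card_le ?_
    rw [Fintype.card_fin, Fintype.card_subtype_compl, Fintype.card_coe]
    omega
  let V := (Matrix.vandermonde fun i => α (e i)).transpose
  have hV : IsUnit V := by
    rw [Matrix.isUnit_iff_isUnit_det, Matrix.det_transpose, isUnit_iff_ne_zero,
      Matrix.det_vandermonde_ne_zero_iff]
    exact hα.comp (Subtype.val_injective.comp e.injective)
  obtain ⟨u, hu⟩ := Matrix.mulVec_surjective_iff_isUnit.2 hV y
  refine ⟨∑ i, Pi.single (e i : κ) (u i), fun j hj => ?_, ?_⟩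
  · have hne : ∀ i, j ≠ e i := fun i h => (e i).2 (h ▸ hj)
    simp [hne]
  · ext r
    rw [map_sum, Finset.sum_apply, ← hu]
    simp only [powerSums_single]
    rfl

theorem exists_surjectiveAvoiding_of_injective (F : Type*) {E κ : Type*} [Field F] [Field E]
    [Algebra F E] [FiniteDimensional F E] [Fintype κ] {α : κ → E} (hα : Function.Injective α)
    (n : ℕ) :
    ∃ Rec : (κ → Fin (Module.finrank F E) → F) →ₗ[F] (Fin (Module.finrank F E * n) → F),
      ∀ U : Finset κ, U.card + n ≤ Fintype.card κ → SurjectiveAvoiding Rec U := by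
  let symbols : (Fin (Module.finrank F E) → F) ≃ₗ[F] E := LinearEquiv.ofFinrankEq _ _ (by simp)
  let values : (Fin n → E) ≃ₗ[F] (Fin (Module.finrank F E * n) → F) :=
    LinearEquiv.ofFinrankEq _ _ (by simp [Module.finrank_pi_fintype, mul_comm])
  refine ⟨values.toLinearMap ∘ₗ (powerSums α n).restrictScalars F ∘ₗ
    (LinearEquiv.piCongrRight fun _ => symbols).toLinearMap, fun U hU y => ?_⟩
  obtain ⟨v, hvU, hv⟩ := surjectiveAvoiding_powerSums hα hU (values.symm y)
  refine ⟨fun j => symbols.symm (v j), fun j hj => by simp [hvU j hj], ?_⟩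
  have hsymbols :
      (LinearEquiv.piCongrRight fun _ => symbols) (fun j => symbols.symm (v j)) = v := by
    ext j
    simp
  simp [hsymbols, hv]

theorem exists_surjectiveAvoiding_of_card_le_pow (F : Type*) {κ : Type*} [Field F] [Finite F]
    [Fintype κ] {b : ℕ} (hb : b ≠ 0) (hcard : Fintype.card κ ≤ Nat.card F ^ b) (n : ℕ) :
    ∃ Rec : (κ → Fin b → F) →ₗ[F] (Fin (b * n) → F),
      ∀ U : Finset κ, U.card + n ≤ Fintype.card κ → SurjectiveAvoiding Rec U := by
  obtain ⟨p, _⟩ := CharP.exists F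
  have : Fact p.Prime := ⟨CharP.char_is_prime F p⟩
  have : NeZero b := ⟨hb⟩
  let E := FiniteField.Extension F p b
  have : Fintype E := Fintype.ofFinite E
  obtain ⟨α⟩ : Nonempty (κ ↪ E) := Function.Embedding.nonempty_of_card_le <| by
    rwa [Fintype.card_eq_nat_card (α := E), FiniteField.natCard_extension]
  have hE : Module.finrank F E = b := FiniteField.finrank_extension F p b
  exact hE ▸ exists_surjectiveAvoiding_of_injective F α.injective n

/-- The servers outside `U u`, each of which can compute `y u` from its view, agree on a preimage
of `y u` in which the servers of `U u` send zero. -/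
theorem exists_answers {R κ W V X ι : Type*} {View : κ → Type*} [Semiring R] [AddCommMonoid W]
    [AddCommMonoid V] [Module R W] [Module R V] [Fintype ι] {Rec : (κ → W) →ₗ[R] V}
    {U : ι → Finset κ} (hRec : ∀ u, SurjectiveAvoiding Rec (U u)) (view : ∀ j, X → View j)
    (y : ι → X → V) (hy : ∀ u, ∀ j ∉ U u, (y u).FactorsThrough (view j)) :
    ∃ answer : ∀ j, View j → W, ∀ x, Rec (fun j => answer j (view j x)) = ∑ u, y u x := by
  choose preimage hzero hpreimage using hRec
  refine ⟨fun j w => ∑ u, preimage u (Function.extend (view j) (y u) 0 w) j, fun x => ?_⟩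
  have hanswers : (fun j => ∑ u, preimage u (Function.extend (view j) (y u) 0 (view j x)) j) =
      ∑ u, preimage u (y u x) := by
    ext j
    rw [Finset.sum_apply]
    refine Finset.sum_congr rfl fun u _ => ?_
    by_cases hj : j ∈ U u
    · rw [hzero u _ j hj, hzero u _ j hj]
    · rw [(hy u j hj).extend_apply]
  rw [hanswers, map_sum]
  simp only [hpreimage]

section Polynomials

open MvPolynomial

variable {R σ τ : Type*} [CommSemiring R]

theorem eval_eq_of_mem_supported {p : MvPolynomial σ R} {s : Set σ} (hp : p ∈ supported R s)
    {z z' : σ → R} (hz : Set.EqOn z z' s) : eval z p = eval z' p :=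
  eval₂Hom_congr' rfl (fun _ ha _ => hz (mem_supported.1 hp ha)) rfl

theorem totalDegree_bind₁_le {g : σ → MvPolynomial τ R} {n : ℕ}
    (hg : ∀ i, (g i).totalDegree ≤ n) (f : MvPolynomial σ R) :
    (bind₁ g f).totalDegree ≤ f.totalDegree * n := by
  rw [← aeval_eq_bind₁, aeval_def, eval₂_eq]
  refine totalDegree_finsetSum_le fun v hv => ?_
  calc (algebraMap R (MvPolynomial τ R) (f.coeff v) * ∏ i ∈ v.support, g i ^ v i).totalDegree
      ≤ (∏ i ∈ v.support, g i ^ v i).totalDegree := by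
        simpa [algebraMap_eq] using
          totalDegree_mul (C (f.coeff v)) (∏ i ∈ v.support, g i ^ v i)
    _ ≤ ∑ i ∈ v.support, (g i ^ v i).totalDegree := totalDegree_finsetProd _ _
    _ ≤ ∑ i ∈ v.support, v i * n := Finset.sum_le_sum fun i _ =>
        (totalDegree_pow _ _).trans (Nat.mul_le_mul_left _ (hg i))
    _ = (v.sum fun _ e => e) * n := (Finset.sum_mul ..).symm
    _ ≤ f.totalDegree * n := Nat.mul_le_mul_right n (le_totalDegree hv)

/-- The polynomial in the summands `x_{q,S}` obtained from a polynomial in the variables `x_q` by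
substituting `x_q = ∑_S x_{q,S}`. -/
noncomputable def expandSummands (τ : Type*) [Fintype τ] :
    MvPolynomial σ R →ₐ[R] MvPolynomial (σ × τ) R :=
  bind₁ fun q => ∑ S : τ, X (q, S)

theorem eval_expandSummands [Fintype τ] (z : σ × τ → R) (f : MvPolynomial σ R) :
    eval z (expandSummands τ f) = eval (fun q => ∑ S, z (q, S)) f := by
  simpa [expandSummands] using aeval_bind₁ z (fun q => ∑ S : τ, X (q, S)) f

theorem totalDegree_expandSummands_le [Fintype τ] (f : MvPolynomial σ R) :
    (expandSummands τ f).totalDegree ≤ f.totalDegree := by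
  have hdegree (q : σ) : (∑ S : τ, X (q, S) : MvPolynomial (σ × τ) R).totalDegree ≤ 1 :=
    totalDegree_finsetSum_le fun S _ => (totalDegree_monomial_le _ _).trans (by simp)
  simpa [expandSummands] using totalDegree_bind₁_le hdegree f

variable {κ : Type*} [Fintype κ] {A : σ → Finset κ} {t d : ℕ}

theorem exists_superset_biUnion_card_eq {s : Finset σ} (hA : ∀ a ∈ s, (A a).card ≤ t)
    (hs : s.card ≤ d) (hdt : d * t ≤ Fintype.card κ) :
    ∃ U : Finset κ, U.card = d * t ∧ ∀ a ∈ s, A a ⊆ U := by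
  classical
  have hcard : (s.biUnion A).card ≤ d * t :=
    (Finset.card_biUnion_le_card_mul s A t hA).trans (Nat.mul_le_mul_right t hs)
  obtain ⟨U, hU, hUcard⟩ := Finset.exists_superset_card_eq hcard hdt
  exact ⟨U, hUcard, Finset.biUnion_subset.1 hU⟩

/-- Here `A a` is the set of servers that do not know the variable `a`. -/
theorem exists_sum_supported_eq_of_totalDegree_le (hA : ∀ a, (A a).card ≤ t)
    (hdt : d * t ≤ Fintype.card κ) {p : MvPolynomial σ R} (hp : p.totalDegree ≤ d) :
    ∃ g : {U : Finset κ // U.card = d * t} → MvPolynomial σ R,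
      (∀ U, g U ∈ supported R {a | A a ⊆ U.1}) ∧ ∑ U, g U = p := by
  let knownOutside (U : {U : Finset κ // U.card = d * t}) : Submodule R (MvPolynomial σ R) :=
    (supported R {a | A a ⊆ U}).toSubmodule
  have hmonomial (v) (hv : v ∈ p.support) : monomial v (p.coeff v) ∈ ⨆ U, knownOutside U := by
    have hcard : v.support.card ≤ d := calc
      v.support.card ≤ v.sum fun _ e => e := by
        simpa [Finsupp.sum] using Finset.card_nsmul_le_sum v.support v 1 fun a ha =>
          Nat.one_le_iff_ne_zero.2 (Finsupp.mem_support_iff.1 ha)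
      _ ≤ d := (le_totalDegree hv).trans hp
    obtain ⟨U, hU, hAU⟩ := exists_superset_biUnion_card_eq (fun a _ => hA a) hcard hdt
    refine Submodule.mem_iSup_of_mem ⟨U, hU⟩ (mem_supported.2 ?_)
    rw [vars_monomial (mem_support_iff.1 hv)]
    exact hAU
  have hp_mem : p ∈ ⨆ U, knownOutside U := by
    rw [← support_sum_monomial_coeff p]
    exact Submodule.sum_mem _ hmonomial
  obtain ⟨g, hg, hsum⟩ := (Submodule.mem_iSup_iff_exists_finsupp _ _).1 hp_mem
  exact ⟨g, hg, (Finsupp.sum_fintype g _ fun _ => rfl).symm.trans hsum⟩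

end Polynomials

section Scheme

variable {R σ ι : Type*} {k t : ℕ}

/-- The shares held by server `j`, when the input `x i q` is shared as `∑ S, xs i q S`. -/
def cnfView (j : Fin k) (xs : ι → σ → TSubset k t → R) :
    ι → σ → {S : TSubset k t // j ∉ S.1} → R :=
  fun i q S => xs i q S

theorem exists_eval_of_surjectiveAvoiding [CommSemiring R] {W : Type*} [AddCommMonoid W]
    [Module R W] {d : ℕ} (hdt : d * t ≤ k) {Rec : (Fin k → W) →ₗ[R] (ι → R)}
    (hRec : ∀ U : TSubset k (d * t), SurjectiveAvoiding Rec U) :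
    ∃ Eval : ∀ j : Fin k, (ι → {f : MvPolynomial σ R // f.totalDegree ≤ d}) →
        (ι → σ → {S : TSubset k t // j ∉ S.1} → R) → W,
      ∀ f xs, Rec (fun j => Eval j f (cnfView j xs)) =
        fun i => MvPolynomial.eval (fun q => ∑ S, xs i q S) (f i).1 := by
  have hsplit (f : {f : MvPolynomial σ R // f.totalDegree ≤ d}) :
      ∃ g : TSubset k (d * t) → MvPolynomial (σ × TSubset k t) R,
        (∀ U, g U ∈ MvPolynomial.supported R {a | a.2.1 ⊆ U.1}) ∧
          ∑ U, g U = expandSummands (TSubset k t) f.1 :=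
    exists_sum_supported_eq_of_totalDegree_le (A := fun a : σ × TSubset k t => a.2.1)
      (fun a => a.2.2.le) (by simpa using hdt) ((totalDegree_expandSummands_le f.1).trans f.2)
  choose g hg hsum using hsplit
  have hlocal (f : ι → {f : MvPolynomial σ R // f.totalDegree ≤ d}) (U : TSubset k (d * t)) (j)
      (hj : j ∉ U.1) : Function.FactorsThrough
        (fun (xs : ι → σ → TSubset k t → R) i =>
          MvPolynomial.eval (fun a => xs i a.1 a.2) (g (f i) U)) (cnfView j) := by
    intro xs xs' hview
    funext i
    refine eval_eq_of_mem_supported (hg (f i) U) fun a ha => ?_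
    exact congrFun₃ hview i a.1 ⟨a.2, fun hja => hj (ha hja)⟩
  choose Eval hEval using fun f => exists_answers hRec cnfView _ (hlocal f)
  refine ⟨fun j f => Eval f j, fun f xs => ?_⟩
  rw [hEval]
  funext i
  rw [Finset.sum_apply, ← map_sum, hsum, eval_expandSummands]

end Scheme

theorem downloadRate_eq {k b s : ℕ} (hk : k ≠ 0) (hb : b ≠ 0) (hs : s ≤ k) :
    ((b * (k - s) : ℕ) : ℚ) / ∑ _j : Fin k, (b : ℚ) = 1 - s / k := by
  rw [Fin.sum_const, nsmul_eq_mul, Nat.cast_mul, Nat.cast_sub hs]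
  field_simp

/-- **Optimal-rate CNF-based linear HSS for low-degree polynomials.**
For positive integers `t, k, d, m` with `d*t < k`, a finite field `F`, and an integer
`b ≥ log_{|F|} k` (i.e. `k ≤ |F|^b`), setting `ℓ = b(k − dt)`, there is a `t`-private
`k`-server linear HSS for `POLY_{d,m}(F)^ℓ` in which each input is shared via `t`-private
`k`-party CNF sharing over `F` (which is `t`-private), correctness holds for every additive
CNF sharing of each input, reconstruction is `F`-linear, and the download rate is at least
`1 − dt/k`. -/
theorem cnf_hss_rate_one_minus_dt_over_k (F : Type) [Field F] [Fintype F]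
    (t k d m b : ℕ) (ht : 0 < t) (hk : 0 < k) (hd : 0 < d) (hm : 0 < m) (hbpos : 0 < b)
    (hdtk : d * t < k) (hb : k ≤ Fintype.card F ^ b) :
    CNFPrivate F k t ∧
    ∃ (bs : Fin k → ℕ)
      (Eval : ∀ j : Fin k,
        (Fin (b * (k - d * t)) → {f : MvPolynomial (Fin m) F // f.totalDegree ≤ d}) →
        (Fin (b * (k - d * t)) → Fin m → ({S : TSubset k t // j ∉ S.1} → F)) →
        (Fin (bs j) → F))
      (Rec : (∀ j : Fin k, Fin (bs j) → F) →ₗ[F] (Fin (b * (k - d * t)) → F)),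
      (∀ (f : Fin (b * (k - d * t)) → {f : MvPolynomial (Fin m) F // f.totalDegree ≤ d})
        (x : Fin (b * (k - d * t)) → Fin m → F)
        (xs : Fin (b * (k - d * t)) → Fin m → TSubset k t → F),
        (∀ i q, ∑ S, xs i q S = x i q) →
        Rec (fun j => Eval j f (fun i q S => xs i q S.1)) =
          fun i => MvPolynomial.eval (x i) (f i).1) ∧
      1 - (d * t : ℚ) / (k : ℚ) ≤ ((b * (k - d * t) : ℕ) : ℚ) / (∑ j, (bs j : ℚ)) := by
  have htk : t ≤ k := (Nat.le_mul_of_pos_left t hd).trans hdtk.le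
  obtain ⟨Rec, hRec⟩ := exists_surjectiveAvoiding_of_card_le_pow F (κ := Fin k) hbpos.ne'
    (by simpa using hb) (k - d * t)
  have hRecU (U : TSubset k (d * t)) : SurjectiveAvoiding Rec U :=
    hRec U (by rw [U.2, Fintype.card_fin]; omega)
  obtain ⟨Eval, hEval⟩ := exists_eval_of_surjectiveAvoiding (σ := Fin m) hdtk.le hRecU
  refine ⟨cnfPrivate_of_le F htk, fun _ => b, Eval, Rec, fun f x xs hx => ?_, ?_⟩
  · refine (hEval f xs).trans ?_
    simp only [hx]
  · rw [downloadRate_eq hk.ne' hbpos.ne' hdtk.le, Nat.cast_mul]
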